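/- Let (T₀, T̃₀) be a joint pair of closed abstract Friedrichs operators on a complex Hilbert space H, and let V be a closed subspace of the graph space W (closed in the graph norm) with W₀ ⊆ V. Then T₁|_V : V → H is bijective if and only if V ∔ ker T₁ = W, i.e. V ∩ ker T₁ = {0} and V + ker T₁ = W. -/

import Mathlib

open LinearPMap
open scoped LinearPMap

noncomputable section

variable {H : Type*} [NormedAddCommGroup H] [InnerProductSpace ℂ H] [CompleteSpace H]

local notation "⟪" x ", " y "⟫" => @inner ℂ _ _ x y

/-- Conditions (T1)–(T2) for a pair of operators with common dense domain. -/
structure IsPreFriedrichsPair (T Tt : H →ₗ.[ℂ] H) : Prop where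
  dom_eq : T.domain = Tt.domain
  dense' : Dense (T.domain : Set H)
  t1 : ∀ (φ : T.domain) (ψ : Tt.domain), ⟪T φ, (ψ : H)⟫ = ⟪(φ : H), Tt ψ⟫
  t2 : ∃ c : ℝ, 0 < c ∧ ∀ φ : (T + Tt).domain, ‖(T + Tt) φ‖ ≤ c * ‖(φ : H)‖

/-- A joint pair of abstract Friedrichs operators: (T1)–(T3). -/
structure IsFriedrichsPair (T Tt : H →ₗ.[ℂ] H) extends IsPreFriedrichsPair T Tt : Prop where
  t3 : ∃ μ₀ : ℝ, 0 < μ₀ ∧ ∀ φ : (T + Tt).domain,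
        2 * μ₀ * ‖(φ : H)‖ ^ 2 ≤ (⟪(T + Tt) φ, (φ : H)⟫).re

/-- The kernel of a partially defined operator, as a submodule of the ambient space. -/
def pKer (f : H →ₗ.[ℂ] H) : Submodule ℂ H :=
  (LinearMap.ker f.toFun).map f.domain.subtype

theorem frd_bound (T Tt : H →ₗ.[ℂ] H) (hF : IsFriedrichsPair T Tt) :
    ∃ μ : ℝ, 0 < μ ∧ ∀ φ : Tt.domain, μ * ‖(φ : H)‖ ≤ ‖Tt φ‖ := by
  obtain ⟨μ, hμ, h⟩ := hF.t3
  refine ⟨μ, hμ, fun φ => ?_⟩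
  have hφT : (φ : H) ∈ T.domain := by rw [hF.dom_eq]; exact φ.2
  have h1 := h ⟨(φ : H), hφT, φ.2⟩
  have h2 : (T + Tt) ⟨(φ : H), hφT, φ.2⟩ = T ⟨φ, hφT⟩ + Tt φ := rfl
  rw [h2, inner_add_left, Complex.add_re] at h1
  have h3 := hF.t1 ⟨φ, hφT⟩ φ
  simp only at h3 h1
  rw [h3] at h1
  have h4 : (⟪(φ : H), Tt φ⟫).re ≤ ‖(φ : H)‖ * ‖Tt φ‖ :=
    (Complex.re_le_norm _).trans (norm_inner_le_norm _ _)
  have h5 : (⟪Tt φ, (φ : H)⟫).re ≤ ‖Tt φ‖ * ‖(φ : H)‖ :=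
    (Complex.re_le_norm _).trans (norm_inner_le_norm _ _)
  rcases (norm_nonneg (φ : H)).eq_or_lt with h0 | h0
  · rw [← h0]; simp
  · refine le_of_mul_le_mul_right ?_ h0
    nlinarith

theorem frd_surj (T Tt : H →ₗ.[ℂ] H) (hF : IsFriedrichsPair T Tt) (f : H) :
    ∃ u : (Tt†).domain, Tt† u = f := by
  obtain ⟨μ, hμ, hb⟩ := frd_bound T Tt hF
  have hd : Dense (Tt.domain : Set H) := hF.dom_eq ▸ hF.dense'
  have hinj : Function.Injective Tt.toFun := by
    rw [injective_iff_map_eq_zero]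
    intro φ hφ
    have h1 := hb φ
    have h2 : Tt φ = 0 := hφ
    rw [h2, norm_zero] at h1
    have h3 : ‖(φ : H)‖ ≤ 0 := by
      by_contra hc
      push Not at hc
      nlinarith [mul_pos hμ hc]
    exact Subtype.ext (norm_le_zero_iff.mp h3)
  let e := LinearEquiv.ofInjective Tt.toFun hinj
  let g : LinearMap.range Tt.toFun →ₗ[ℂ] ℂ :=
    ((innerSL ℂ f).toLinearMap.comp Tt.domain.subtype).comp e.symm.toLinearMap
  have hg : ∀ φ : Tt.domain, g (e φ) = ⟪f, (φ : H)⟫ := by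
    intro φ
    simp [g]
  let G := g.mkContinuous (‖f‖ / μ) (by
    intro x
    obtain ⟨φ, rfl⟩ := e.surjective x
    rw [hg]
    have h1 : ‖e φ‖ = ‖Tt φ‖ := rfl
    rw [h1]
    refine (norm_inner_le_norm _ _).trans ?_
    rw [div_mul_eq_mul_div, le_div_iff₀ hμ, mul_assoc]
    refine mul_le_mul_of_nonneg_left ?_ (norm_nonneg _)
    rw [mul_comm]
    exact hb φ)
  obtain ⟨K, hK, -⟩ := exists_extension_norm_eq _ G
  let u := (InnerProductSpace.toDual ℂ H).symm K
  have hu : ∀ φ : Tt.domain, ⟪f, (φ : H)⟫ = ⟪u, Tt φ⟫ := by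
    intro φ
    rw [InnerProductSpace.toDual_symm_apply, ← hg]
    exact (hK (e φ)).symm
  exact ⟨⟨u, mem_adjoint_domain_of_exists u ⟨f, hu⟩⟩, adjoint_apply_eq hd _ hu⟩

theorem mem_pKer_iff (f : H →ₗ.[ℂ] H) (x : H) :
    x ∈ pKer f ↔ ∃ h : x ∈ f.domain, f ⟨x, h⟩ = 0 := by
  constructor
  · rintro ⟨y, hy, rfl⟩
    exact ⟨y.2, hy⟩
  · rintro ⟨h, h0⟩
    exact ⟨⟨x, h⟩, h0, rfl⟩

/-- For a joint pair `(T₀, T̃₀)` of closed abstract Friedrichs operators and a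
subspace `V` of the graph space `W` containing `W₀` which is closed in the graph norm
(equivalently, the graph of `T₁|_V` is closed), the restriction `T₁|_V : V → H` is bijective
iff `V ∔ ker T₁ = W`, i.e. `V ∩ ker T₁ = {0}` and `V + ker T₁ = W`. -/
theorem statement14 (T Tt : H →ₗ.[ℂ] H) (hF : IsFriedrichsPair T Tt)
    (hT : T.IsClosed) (hTt : Tt.IsClosed)
    (V : Submodule ℂ H) (hV₀ : T.domain ≤ V) (hVW : V ≤ (Tt†).domain)
    (hVClosed : IsClosed {p : H × H | p.1 ∈ V ∧ p ∈ (Tt†).graph}) :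
    Function.Bijective
        (fun x : ((Tt†).domRestrict V).domain => ((Tt†).domRestrict V) x) ↔
      (V ⊓ pKer (Tt†) = ⊥ ∧ V ⊔ pKer (Tt†) = (Tt†).domain) := by
  have hs := frd_surj T Tt hF
  generalize Tt† = S at *
  have hr : ∀ x : (S.domRestrict V).domain, S.domRestrict V x = S ⟨x, x.2.2⟩ := fun _ => rfl
  constructor
  · rintro ⟨hi, hsu⟩
    constructor
    · rw [eq_bot_iff]
      rintro x ⟨hxV, hxk⟩
      obtain ⟨hxd, hx0⟩ := (mem_pKer_iff S x).1 hxk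
      have h1 : (⟨x, hxV, hxd⟩ : (S.domRestrict V).domain) = 0 := by
        apply hi
        simp only [hr]
        rw [hx0]
        exact (LinearPMap.map_zero S).symm
      exact congrArg Subtype.val h1
    · apply le_antisymm
      · refine sup_le hVW ?_
        intro x hx
        exact ((mem_pKer_iff S x).1 hx).1
      · intro w hw
        obtain ⟨v, hv⟩ := hsu (S ⟨w, hw⟩)
        simp only [hr] at hv
        refine Submodule.mem_sup.2 ⟨v, v.2.1, w - v, ?_, by abel⟩
        refine (mem_pKer_iff S _).2 ⟨S.domain.sub_mem hw v.2.2, ?_⟩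
        have := LinearPMap.map_sub S ⟨w, hw⟩ ⟨v, v.2.2⟩
        rw [hv, sub_self] at this
        exact this
  · rintro ⟨hbot, htop⟩
    constructor
    · intro x y hxy
      simp only [hr] at hxy
      have h1 : (x : H) - y ∈ V ⊓ pKer S := by
        refine ⟨V.sub_mem x.2.1 y.2.1, ?_⟩
        refine (mem_pKer_iff S _).2 ⟨S.domain.sub_mem x.2.2 y.2.2, ?_⟩
        have := LinearPMap.map_sub S ⟨x, x.2.2⟩ ⟨y, y.2.2⟩
        rw [hxy, sub_self] at this
        exact this
      rw [hbot, Submodule.mem_bot, sub_eq_zero] at h1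
      exact Subtype.ext h1
    · intro f
      obtain ⟨⟨u, hu⟩, hf⟩ := hs f
      have h1 := hu
      rw [← htop] at h1
      obtain ⟨v, hv, k, hk, rfl⟩ := Submodule.mem_sup.1 h1
      obtain ⟨hkd, hk0⟩ := (mem_pKer_iff S k).1 hk
      refine ⟨⟨v, hv, hVW hv⟩, ?_⟩
      have := LinearPMap.map_add S ⟨v, hVW hv⟩ ⟨k, hkd⟩
      rw [hk0, add_zero] at this
      exact this.symm.trans hf
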